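/- arXiv:2407.20155 — 6 statements merged into one kernel-verified Lean document; each statement's English description precedes it below -/
import Mathlib

section
/- If u : (0,∞) × ℝ → ℝ is a smooth solution of the heat equation u_t = u_xx, then for every a > 0 the function v(t,x) := (1 + 4at)^(−1/2) · exp(−a·x²/(1 + 4at)) · u(t/(1 + 4at), x/(1 + 4at)) is also a solution of v_t = v_xx on (0,∞) × ℝ. This is the finite transformation generated by the projective symmetry v₅ = t²∂_t + tx∂_x − (1/4)(2t + x²)u∂_u of the heat equation. -/
open Real Set

/-- If `u` is a smooth solution of the heat equation `u_t = u_xx` on `(0,∞) × ℝ`, then for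
every `a > 0` the function
`v(t,x) := (1 + 4at)^(−1/2) · exp(−a·x²/(1 + 4at)) · u(t/(1 + 4at), x/(1 + 4at))`
is again a solution on `(0,∞) × ℝ`: the finite transformation generated by the projective
symmetry `v₅ = t²∂_t + tx∂_x − (1/4)(2t + x²)u∂_u`. -/
theorem heat_projective_symmetry (u : ℝ → ℝ → ℝ)
    (hsmooth : ContDiffOn ℝ (⊤ : ℕ∞) (fun p : ℝ × ℝ => u p.1 p.2) (Ioi 0 ×ˢ univ))
    (hheat : ∀ t > (0 : ℝ), ∀ x : ℝ,
      deriv (fun s => u s x) t = iteratedDeriv 2 (fun z => u t z) x)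
    (a : ℝ) (ha : 0 < a) :
    ∀ t > (0 : ℝ), ∀ x : ℝ,
      deriv (fun s => (fun t' x' => (1 + 4 * a * t') ^ (-(1 : ℝ) / 2)
          * Real.exp (-a * x' ^ 2 / (1 + 4 * a * t'))
          * u (t' / (1 + 4 * a * t')) (x' / (1 + 4 * a * t'))) s x) t =
        iteratedDeriv 2
          (fun z => (fun t' x' => (1 + 4 * a * t') ^ (-(1 : ℝ) / 2)
            * Real.exp (-a * x' ^ 2 / (1 + 4 * a * t'))
            * u (t' / (1 + 4 * a * t')) (x' / (1 + 4 * a * t'))) t z) x := by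
  intro t ht x
  have hpos : 0 < 1 + 4 * a * t := by positivity
  obtain ⟨c, hc⟩ : ∃ c, c = 1 + 4 * a * t := ⟨_, rfl⟩
  have hc0 : 0 < c := hc ▸ hpos
  have hcne : c ≠ 0 := hc0.ne'
  have hT : 0 < t / c := div_pos ht hc0
  have hopen : IsOpen (Ioi (0 : ℝ) ×ˢ (univ : Set ℝ)) := isOpen_Ioi.prod isOpen_univ
  have hat : ∀ X : ℝ, ContDiffAt ℝ (⊤ : ℕ∞) (fun p : ℝ × ℝ => u p.1 p.2) (t / c, X) := fun X =>
    hsmooth.contDiffAt (hopen.mem_nhds ⟨hT, mem_univ _⟩)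
  obtain ⟨g, hg⟩ : ∃ g : ℝ → ℝ, g = fun z => u (t / c) z := ⟨_, rfl⟩
  have hgs : ContDiff ℝ 2 g := by
    rw [contDiff_iff_contDiffAt]
    intro X
    have h1 : ContDiffAt ℝ (⊤ : ℕ∞) g X := by
      rw [hg]
      exact (hat X).comp X (f := fun z : ℝ => (t / c, z)) (by fun_prop)
    exact contDiffAt_infty.1 h1 2
  have hg1 : ∀ X, HasDerivAt g (deriv g X) X := fun X =>
    ((hgs.differentiable (by norm_num)) X).hasDerivAt
  have hg2 : ∀ X, HasDerivAt (deriv g) (deriv (deriv g) X) X := fun X =>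
    ((hgs.differentiable_deriv_two) X).hasDerivAt
  -- joint derivative
  obtain ⟨L, hL⟩ : ∃ L, HasFDerivAt (fun p : ℝ × ℝ => u p.1 p.2) L (t / c, x / c) :=
    ⟨_, ((hat (x / c)).differentiableAt (by simp)).hasFDerivAt⟩
  have hL1 : L (1, 0) = deriv (deriv g) (x / c) := by
    have h1 : HasDerivAt (fun s : ℝ => (s, x / c)) ((1 : ℝ), (0 : ℝ)) (t / c) :=
      (hasDerivAt_id _).prodMk (hasDerivAt_const _ _)
    have h2 : HasDerivAt (fun s => u s (x / c)) (L (1, 0)) (t / c) :=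
      HasFDerivAt.comp_hasDerivAt (l := fun p : ℝ × ℝ => u p.1 p.2) (f := fun s : ℝ => (s, x / c)) (t / c) hL h1
    rw [← h2.deriv, hheat _ hT, ← hg, iteratedDeriv_succ, iteratedDeriv_one]
  have hL2 : L (0, 1) = deriv g (x / c) := by
    have h1 : HasDerivAt (fun s : ℝ => (t / c, s)) ((0 : ℝ), (1 : ℝ)) (x / c) :=
      (hasDerivAt_const _ _).prodMk (hasDerivAt_id _)
    have h2 : HasDerivAt (fun s => u (t / c) s) (L (0, 1)) (x / c) :=
      HasFDerivAt.comp_hasDerivAt (l := fun p : ℝ × ℝ => u p.1 p.2) (f := fun s : ℝ => (t / c, s)) (x / c) hL h1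
    rw [← h2.deriv, ← hg]
  have hLv : ∀ p q : ℝ, L (p, q) = p * deriv (deriv g) (x / c) + q * deriv g (x / c) := by
    intro p q
    have : ((p, q) : ℝ × ℝ) = p • (1, 0) + q • (0, 1) := by simp
    rw [this, map_add, map_smul, map_smul, hL1, hL2, smul_eq_mul, smul_eq_mul]
  -- time derivative
  have hC : HasDerivAt (fun s : ℝ => 1 + 4 * a * s) (4 * a) t := by
    simpa using ((hasDerivAt_id t).const_mul (4 * a)).const_add 1
  have hK := hC.rpow_const (p := -(1 : ℝ) / 2) (Or.inl hpos.ne')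
  have hE := ((hasDerivAt_const t (-a * x ^ 2)).div hC hpos.ne').exp
  have hP : HasDerivAt (fun s : ℝ => (s / (1 + 4 * a * s), x / (1 + 4 * a * s))) _ t :=
    ((hasDerivAt_id t).div hC hpos.ne').prodMk ((hasDerivAt_const t x).div hC hpos.ne')
  have hL' : HasFDerivAt (fun p : ℝ × ℝ => u p.1 p.2) L
      ((fun s : ℝ => (s / (1 + 4 * a * s), x / (1 + 4 * a * s))) t) := by
    simpa only [← hc] using hL
  have hU := HasFDerivAt.comp_hasDerivAt t hL' hP
  have hV := (hK.mul hE).mul hU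
  -- space derivatives
  obtain ⟨K, hKd⟩ : ∃ K, K = c ^ (-(1 : ℝ) / 2) := ⟨_, rfl⟩
  have hEz : ∀ z : ℝ, HasDerivAt (fun z => K * Real.exp (-a * z ^ 2 / c))
      (K * Real.exp (-a * z ^ 2 / c) * (-2 * a * z / c)) z := by
    intro z
    have := ((((hasDerivAt_pow 2 z).const_mul (-a)).div_const c).exp).const_mul K
    refine this.congr_deriv ?_
    norm_num
    ring
  have hcd : ∀ z : ℝ, HasDerivAt (fun z : ℝ => z / c) (1 / c) z := fun z =>
    (hasDerivAt_id z).div_const c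
  have hgc : ∀ z : ℝ, HasDerivAt (fun z : ℝ => g (z / c)) (deriv g (z / c) * (1 / c)) z :=
    fun z => HasDerivAt.comp (h₂ := g) (h := fun z : ℝ => z / c) z (hg1 (z / c)) (hcd z)
  have hgc2 : ∀ z : ℝ, HasDerivAt (fun z : ℝ => deriv g (z / c))
      (deriv (deriv g) (z / c) * (1 / c)) z :=
    fun z => HasDerivAt.comp (h₂ := deriv g) (h := fun z : ℝ => z / c) z (hg2 (z / c)) (hcd z)
  have hF1 : deriv (fun z => K * Real.exp (-a * z ^ 2 / c) * g (z / c)) =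
      fun z => K * Real.exp (-a * z ^ 2 / c) * (-2 * a * z / c) * g (z / c)
        + K * Real.exp (-a * z ^ 2 / c) * (deriv g (z / c) * (1 / c)) :=
    funext fun z => ((hEz z).mul (hgc z)).deriv
  have hlin : HasDerivAt (fun z : ℝ => -2 * a * z / c) (-2 * a / c) x := by
    simpa using ((hasDerivAt_id x).const_mul (-2 * a)).div_const c
  have hF2 := ((((hEz x).mul hlin).mul (hgc x)).add
    ((hEz x).mul ((hgc2 x).mul_const (1 / c)))).deriv
  have hR : iteratedDeriv 2 (fun z => K * Real.exp (-a * z ^ 2 / c) * g (z / c)) x =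
      deriv (fun z => K * Real.exp (-a * z ^ 2 / c) * (-2 * a * z / c) * g (z / c)
        + K * Real.exp (-a * z ^ 2 / c) * (deriv g (z / c) * (1 / c))) x := by
    rw [iteratedDeriv_succ, iteratedDeriv_one, hF1]
  have hR := hR.trans hF2
  have hLHS := hV.deriv
  have hrp : c ^ (-(1 : ℝ) / 2 - 1) = K / c := by rw [hKd, rpow_sub_one hcne]
  simp only [← hc]
  rw [← hKd]
  have hgx : ∀ z, u (t / c) z = g z := fun z => by rw [hg]
  simp only [hgx]
  rw [hR]
  refine hLHS.trans ?_
  simp only [hLv, Function.comp, Pi.mul_apply, Pi.div_apply, id, ← hc, hrp, ← hKd, hgx]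
  have ht' : 4 * a * t = c - 1 := by linarith
  have ht2 : 1 * c - t * (4 * a) = 1 := by linarith
  rw [ht2]
  field_simp
  ring
end

section
/- For every t > 0 and all x, y > 0, the diffusion kernel K(t,x,y) satisfies the spatially varying diffusion equation in (t,x): ∂K/∂t (t,x,y) = x · ∂²K/∂x² (t,x,y) + (1/2) · ∂K/∂x (t,x,y). -/
open Real

/-- The spatially varying diffusion kernel on `(0,∞)`:
`K(t,x,y) = (πty)^(−1/2) · exp(−(x+y)/t) · cosh(2√(xy)/t)`. -/
noncomputable def diffusionKernel (t x y : ℝ) : ℝ :=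
  (Real.pi * t * y) ^ (-(1 : ℝ) / 2) * Real.exp (-(x + y) / t) *
    Real.cosh (2 * Real.sqrt (x * y) / t)

/-- For every `t > 0` and `x, y > 0`, the diffusion kernel satisfies the spatially varying
diffusion equation `∂K/∂t = x·∂²K/∂x² + (1/2)·∂K/∂x`. -/
theorem diffusionKernel_satisfies_diffusion_equation (t x y : ℝ) (ht : 0 < t) (hx : 0 < x)
    (hy : 0 < y) :
    deriv (fun s => diffusionKernel s x y) t =
      x * iteratedDeriv 2 (fun z => diffusionKernel t z y) x +
        (1 / 2) * deriv (fun z => diffusionKernel t z y) x := by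
  have hr : ∀ z : ℝ, 0 < z →
      HasDerivAt (fun z => Real.sqrt (z * y)) (y / (2 * Real.sqrt (z * y))) z := by
    intro z hz
    have h := ((hasDerivAt_id z).mul_const y).sqrt (by simp; constructor <;> positivity)
    simpa using h
  have hE : ∀ z : ℝ, HasDerivAt (fun z => Real.exp (-(z + y) / t))
      (Real.exp (-(z + y) / t) * (-1 / t)) z := by
    intro z
    have h := (((hasDerivAt_id z).add_const y).neg.div_const t).exp
    simpa using h
  have hu : ∀ z : ℝ, 0 < z → HasDerivAt (fun z => 2 * Real.sqrt (z * y) / t)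
      (2 * (y / (2 * Real.sqrt (z * y))) / t) z := by
    intro z hz
    exact ((hr z hz).const_mul 2).div_const t
  have h1 : ∀ z : ℝ, 0 < z → HasDerivAt (fun z => diffusionKernel t z y)
      ((Real.pi * t * y) ^ (-(1 : ℝ) / 2) * (Real.exp (-(z + y) / t) * (-1 / t)) *
          Real.cosh (2 * Real.sqrt (z * y) / t) +
        (Real.pi * t * y) ^ (-(1 : ℝ) / 2) * Real.exp (-(z + y) / t) *
          (Real.sinh (2 * Real.sqrt (z * y) / t) *
            (2 * (y / (2 * Real.sqrt (z * y))) / t))) z := by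
    intro z hz
    exact ((hE z).const_mul _).mul (hu z hz).cosh
  have hev : deriv (fun z => diffusionKernel t z y) =ᶠ[nhds x] _ :=
    Filter.eventually_of_mem (Ioi_mem_nhds hx) (fun z hz => (h1 z hz).deriv)
  have hrx : 0 < Real.sqrt (x * y) := Real.sqrt_pos.2 (by positivity)
  have h2 := ((((hE x).mul_const (-1 / t)).const_mul ((Real.pi * t * y) ^ (-(1 : ℝ) / 2))).mul
      (hu x hx).cosh).add
    (((hE x).const_mul ((Real.pi * t * y) ^ (-(1 : ℝ) / 2))).mul ((hu x hx).sinh.mul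
      ((((hasDerivAt_const x y).div ((hr x hx).const_mul 2) (by positivity)).const_mul 2).div_const
        t)))
  have h2' := (h2.congr_of_eventuallyEq hev).deriv
  have hA : HasDerivAt (fun s : ℝ => (Real.pi * s * y) ^ (-(1 : ℝ) / 2))
      ((Real.pi * t * y) ^ (-(1 : ℝ) / 2) * (-1 / (2 * t))) t := by
    have h := (((hasDerivAt_id t).const_mul Real.pi).mul_const y).rpow_const
      (p := -(1 : ℝ) / 2) (Or.inl (by simp only [id]; positivity))
    simp only [id] at h
    have hp : 0 < Real.pi * t * y := by positivity
    rw [Real.rpow_sub_one hp.ne'] at h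
    convert h using 1
    field_simp
  have hinv : ∀ c : ℝ, HasDerivAt (fun s : ℝ => c / s) (-c / t ^ 2) t := by
    intro c
    have h := (hasDerivAt_const t c).div (hasDerivAt_id t) ht.ne'
    have e : (0 * id t - c * 1) / id t ^ 2 = -c / t ^ 2 := by simp
    rw [e] at h
    exact h
  have h3 := (hA.mul (hinv (-(x + y))).exp).mul (hinv (2 * Real.sqrt (x * y))).cosh
  have h3' : deriv (fun s => diffusionKernel s x y) t = _ := h3.deriv
  rw [iteratedDeriv_succ, iteratedDeriv_one, h2', h3', (h1 x hx).deriv]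
  have hsq : Real.sqrt (x * y) ^ 2 = x * y := Real.sq_sqrt (by positivity)
  simp only [Pi.mul_apply, Pi.div_apply]
  generalize (Real.pi * t * y) ^ (-(1 : ℝ) / 2) = A
  generalize Real.exp (-(x + y) / t) = E
  generalize Real.cosh (2 * Real.sqrt (x * y) / t) = C
  generalize Real.sinh (2 * Real.sqrt (x * y) / t) = S
  generalize Real.sqrt (x * y) = r at *
  have hxe : x = r ^ 2 / y := by field_simp; linarith
  clear h1 h2 h2' h3 h3' hev hr hu hE hA hinv
  subst hxe
  field_simp
  ring
end

section
/- For every t > 0 and all x, y > 0, the diffusion kernel satisfies the linearized symmetry condition associated with the invariant infinitesimal generator v = t²∂_t + 2tx∂_x − (x − y + t/2)u∂_u, namely (x − y + t/2)·K(t,x,y) + t²·∂K/∂t (t,x,y) + 2tx·∂K/∂x (t,x,y) = 0. -/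
open Real

/-- The diffusion kernel satisfies the linearized symmetry condition of the invariant
generator `v = t²∂_t + 2tx∂_x − (x − y + t/2)u∂_u`, namely
`(x − y + t/2)·K + t²·∂K/∂t + 2tx·∂K/∂x = 0`. -/
theorem diffusionKernel_linearized_symmetry_condition (t x y : ℝ) (ht : 0 < t) (hx : 0 < x)
    (hy : 0 < y) :
    (x - y + t / 2) * diffusionKernel t x y +
      t ^ 2 * deriv (fun s => diffusionKernel s x y) t +
      2 * t * x * deriv (fun z => diffusionKernel t z y) x = 0 := by
  have hp : 0 < Real.pi * t * y := by positivity
  have hxy : 0 < x * y := by positivity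
  have ht0 : t ≠ 0 := ht.ne'
  have hA : HasDerivAt (fun s : ℝ => (Real.pi * s * y) ^ (-(1 : ℝ) / 2))
      (-(1 / (2 * t)) * (Real.pi * t * y) ^ (-(1 : ℝ) / 2)) t := by
    have h1 : HasDerivAt (fun s : ℝ => Real.pi * s * y) (Real.pi * 1 * y) t :=
      ((hasDerivAt_id t).const_mul Real.pi).mul_const y
    have h2 := h1.rpow_const (p := -(1 : ℝ) / 2) (Or.inl hp.ne')
    convert h2 using 1
    rw [Real.rpow_sub_one hp.ne']
    have := Real.pi_pos.ne'
    have := hy.ne'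
    field_simp
  have hE : HasDerivAt (fun s : ℝ => Real.exp (-(x + y) / s))
      (Real.exp (-(x + y) / t) * ((x + y) / t ^ 2)) t := by
    have h1 := ((hasDerivAt_const t (-(x + y))).div (hasDerivAt_id t) ht0).exp
    convert h1 using 1 <;> simp
  have hC : HasDerivAt (fun s : ℝ => Real.cosh (2 * Real.sqrt (x * y) / s))
      (Real.sinh (2 * Real.sqrt (x * y) / t) * (-(2 * Real.sqrt (x * y)) / t ^ 2)) t := by
    have h1 := ((hasDerivAt_const t (2 * Real.sqrt (x * y))).div (hasDerivAt_id t) ht0).cosh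
    convert h1 using 1 <;> simp
  have hE' : HasDerivAt (fun z : ℝ => Real.exp (-(z + y) / t))
      (Real.exp (-(x + y) / t) * (-1 / t)) x :=
    ((((hasDerivAt_id x).add_const y).neg).div_const t).exp
  have hC' : HasDerivAt (fun z : ℝ => Real.cosh (2 * Real.sqrt (z * y) / t))
      (Real.sinh (2 * Real.sqrt (x * y) / t) *
        (2 * ((1 * y) / (2 * Real.sqrt (x * y))) / t)) x :=
    (((((hasDerivAt_id x).mul_const y).sqrt hxy.ne').const_mul 2).div_const t).cosh
  have hT : deriv (fun s => diffusionKernel s x y) t = _ := ((hA.mul hE).mul hC).deriv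
  have hX : deriv (fun z => diffusionKernel t z y) x = _ :=
    ((hE'.const_mul ((Real.pi * t * y) ^ (-(1 : ℝ) / 2))).mul hC').deriv
  rw [hT, hX]
  unfold diffusionKernel
  simp only [Pi.mul_apply]
  have hr : 0 < Real.sqrt (x * y) := Real.sqrt_pos.2 hxy
  have hr2 : Real.sqrt (x * y) ^ 2 = x * y := Real.sq_sqrt hxy.le
  generalize Real.cosh (2 * Real.sqrt (x * y) / t) = C
  generalize Real.sinh (2 * Real.sqrt (x * y) / t) = S
  generalize Real.exp (-(x + y) / t) = E
  generalize (Real.pi * t * y) ^ (-(1 : ℝ) / 2) = A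
  generalize Real.sqrt (x * y) = r at *
  have hr0 := hr.ne'
  field_simp
  linear_combination (-4 * A * E * S) * hr2
end

section
/- For every t > 0 and every x > 0, the diffusion kernel has unit mass in the second spatial variable: ∫₀^∞ K(t,x,y) dy = 1. -/
open Real MeasureTheory

/-- For every `t > 0` and `x > 0`, the diffusion kernel has unit mass in the second spatial
variable: `∫₀^∞ K(t,x,y) dy = 1`. -/
theorem diffusionKernel_unit_mass (t x : ℝ) (ht : 0 < t) (hx : 0 < x) :
    ∫ y in Set.Ioi (0 : ℝ), diffusionKernel t x y = 1 := by
  have hpt : 0 < Real.pi * t := mul_pos Real.pi_pos ht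
  have hb : 0 < 1 / t := by positivity
  set s := Real.sqrt x with hs
  have hs2 : s ^ 2 = x := Real.sq_sqrt hx.le
  set c := (Real.sqrt (Real.pi * t))⁻¹ with hc
  let G : ℝ → ℝ := fun u => Real.exp (-(1 / t) * u ^ 2)
  have hG : Integrable G := integrable_exp_neg_mul_sq hb
  have hGi : ∫ u, G u = Real.sqrt (Real.pi * t) := by
    have h := integral_gaussian (1 / t)
    rw [div_div_eq_mul_div, div_one] at h
    exact h
  let H : ℝ → ℝ := fun u => c * (G (u - s) + G (u + s))
  have hHi : ∫ u, H u = 2 := by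
    have h0 : Real.sqrt (Real.pi * t) ≠ 0 := (Real.sqrt_pos.mpr hpt).ne'
    have h1 : ∫ u, (G (u - s) + G (u + s)) = 2 * Real.sqrt (Real.pi * t) := by
      rw [integral_add (hG.comp_sub_right s) (hG.comp_add_right s),
        integral_sub_right_eq_self G s, integral_add_right_eq_self G s, hGi]
      ring
    change ∫ u, c * (G (u - s) + G (u + s)) = 2
    rw [integral_const_mul, h1, hc]
    field_simp
  have hHabs : ∀ u, H |u| = H u := by
    intro u
    rcases abs_choice u with h | h
    · rw [h]
    · rw [h]
      simp only [H, G]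
      rw [show (-u - s) ^ 2 = (u + s) ^ 2 by ring, show (-u + s) ^ 2 = (u - s) ^ 2 by ring]
      ring
  have hhalf : ∫ u in Set.Ioi (0 : ℝ), H u = 1 := by
    have h := integral_comp_abs (f := H)
    simp only [hHabs] at h
    linarith
  rw [← integral_comp_rpow_Ioi_of_pos (g := fun y => diffusionKernel t x y) (two_pos)]
  refine (setIntegral_congr_fun measurableSet_Ioi (fun u hu => ?_)).trans hhalf
  have hu : 0 < u := hu
  have e1 : (Real.pi * t * u ^ 2) ^ (-(1 : ℝ) / 2) = c * u⁻¹ := by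
    rw [neg_div, Real.rpow_neg (by positivity), ← Real.sqrt_eq_rpow, Real.sqrt_mul hpt.le,
      Real.sqrt_sq hu.le, mul_inv]
  have e2 : Real.sqrt (x * u ^ 2) = s * u := by
    rw [Real.sqrt_mul hx.le, Real.sqrt_sq hu.le]
  have e3 : (2 : ℝ) - 1 = 1 := by norm_num
  simp only [smul_eq_mul, diffusionKernel, Real.rpow_two, e3, Real.rpow_one, e1, e2, H, G]
  have a1 : Real.exp (-(1 / t) * (u - s) ^ 2)
      = Real.exp (-(x + u ^ 2) / t) * Real.exp (2 * (s * u) / t) := by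
    rw [← Real.exp_add, ← hs2]; congr 1; field_simp; ring
  have a2 : Real.exp (-(1 / t) * (u + s) ^ 2)
      = Real.exp (-(x + u ^ 2) / t) * Real.exp (-(2 * (s * u) / t)) := by
    rw [← Real.exp_add, ← hs2]; congr 1; field_simp; ring
  rw [a1, a2, Real.cosh_eq]
  field_simp
end

section
/- Let f : (0,∞) → ℝ be bounded and continuous. Then for every x > 0, the convolution ∫₀^∞ K(t,x,y) f(y) dy converges to f(x) as t → 0⁺, i.e. the diffusion kernel satisfies the initial condition K(0,x,y) = δ(x−y) in the sense of the fundamental solution. -/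
open Real MeasureTheory Filter Topology

lemma dk_integrable (h : ℝ → ℝ) (hm : Measurable h) (C : ℝ) (hC : ∀ y, |h y| ≤ C) (a s : ℝ) :
    Integrable (fun v : ℝ => (√π)⁻¹ * Real.exp (-v ^ 2) * h ((a + s * v) ^ 2)) := by
  have h1 : Integrable (fun v : ℝ => (√π)⁻¹ * Real.exp (-v ^ 2)) := by
    have := (integrable_exp_neg_mul_sq (b := 1) one_pos).const_mul (√π)⁻¹
    simpa using this
  refine h1.mul_bdd (c := C) ?_ ?_
  · exact (hm.comp (by fun_prop)).aestronglyMeasurable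
  · exact Eventually.of_forall fun v => hC _

lemma dk_pointwise (h : ℝ → ℝ) (a s u : ℝ) (hs : 0 < s) (ha : 0 < a) (hu : 0 < u) :
    (|(2:ℝ)| * u ^ ((2:ℝ) - 1)) • (diffusionKernel (s ^ 2) (a ^ 2) (u ^ (2:ℝ)) * h (u ^ (2:ℝ)))
    = s⁻¹ * ((√π)⁻¹ * Real.exp (-((u - a) / s) ^ 2) * h (u ^ 2))
     + s⁻¹ * ((√π)⁻¹ * Real.exp (-((-u - a) / s) ^ 2) * h ((-u) ^ 2)) := by
  have e1 : u ^ (2:ℝ) = u ^ 2 := by norm_cast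
  have e2 : u ^ ((2:ℝ) - 1) = u := by norm_num
  have e3 : (π * s ^ 2 * u ^ 2) ^ (-(1:ℝ) / 2) = (√π)⁻¹ * s⁻¹ * u⁻¹ := by
    rw [neg_div, Real.rpow_neg (by positivity), ← Real.sqrt_eq_rpow, Real.sqrt_mul (by positivity),
      Real.sqrt_mul (by positivity), Real.sqrt_sq hs.le, Real.sqrt_sq hu.le, mul_inv, mul_inv]
  have e4 : √(a ^ 2 * u ^ 2) = a * u := by
    rw [← mul_pow, Real.sqrt_sq (by positivity)]
  have e5 : Real.exp (-((u - a) / s) ^ 2)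
      = Real.exp (-(a ^ 2 + u ^ 2) / s ^ 2) * Real.exp (2 * (a * u) / s ^ 2) := by
    rw [← Real.exp_add]; congr 1; field_simp; ring
  have e6 : Real.exp (-((-u - a) / s) ^ 2)
      = Real.exp (-(a ^ 2 + u ^ 2) / s ^ 2) * Real.exp (-(2 * (a * u) / s ^ 2)) := by
    rw [← Real.exp_add]; congr 1; field_simp; ring
  rw [e1, e2, diffusionKernel, e3, e4, e5, e6, Real.cosh_eq, neg_sq, smul_eq_mul,
    abs_of_pos (by norm_num : (0:ℝ) < 2)]
  field_simp

lemma dk_transform (h : ℝ → ℝ) (hm : Measurable h) (C : ℝ) (hC : ∀ y, |h y| ≤ C) (a s : ℝ)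
    (hs : 0 < s) (ha : 0 < a) :
    ∫ y in Set.Ioi (0 : ℝ), diffusionKernel (s ^ 2) (a ^ 2) y * h y
      = ∫ v : ℝ, (√π)⁻¹ * Real.exp (-v ^ 2) * h ((a + s * v) ^ 2) := by
  set F : ℝ → ℝ := fun v : ℝ => (√π)⁻¹ * Real.exp (-v ^ 2) * h ((a + s * v) ^ 2) with hF
  have hFi : Integrable F := dk_integrable h hm C hC a s
  set G : ℝ → ℝ := fun u => s⁻¹ * F ((u - a) / s) with hG
  have hGi : Integrable G := ((hFi.comp_div hs.ne').comp_sub_right a).const_mul s⁻¹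
  have hGF : ∫ u, G u = ∫ v, F v := by
    rw [hG, integral_const_mul, integral_sub_right_eq_self (fun u => F (u / s)) a,
      Measure.integral_comp_div, abs_of_pos hs, smul_eq_mul, inv_mul_cancel_left₀ hs.ne']
  have hGval : ∀ u, G u = s⁻¹ * ((√π)⁻¹ * Real.exp (-((u - a) / s) ^ 2) * h (u ^ 2)) := by
    intro u
    simp only [hG, hF]
    have : a + s * ((u - a) / s) = u := by field_simp; ring
    rw [this]
  rw [← integral_comp_rpow_Ioi _ (two_ne_zero : (2:ℝ) ≠ 0), ← hGF]
  have : ∀ u ∈ Set.Ioi (0:ℝ), (|(2:ℝ)| * u ^ ((2:ℝ) - 1)) •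
      (diffusionKernel (s ^ 2) (a ^ 2) (u ^ (2:ℝ)) * h (u ^ (2:ℝ))) = G u + G (-u) := by
    intro u hu
    rw [hGval, hGval, dk_pointwise h a s u hs ha hu]
  rw [setIntegral_congr_fun measurableSet_Ioi this,
    integral_add hGi.integrableOn hGi.comp_neg.integrableOn, integral_comp_neg_Ioi, neg_zero,
    add_comm]
  exact intervalIntegral.integral_Iic_add_Ioi hGi.integrableOn hGi.integrableOn

/-- For a bounded continuous `f : (0,∞) → ℝ` and every `x > 0`, the convolution
`∫₀^∞ K(t,x,y) f(y) dy` converges to `f(x)` as `t → 0⁺`: the diffusion kernel satisfies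
the initial condition `K(0,x,y) = δ(x−y)` in the sense of the fundamental solution. -/
theorem diffusionKernel_initial_condition (f : ℝ → ℝ)
    (hcont : ContinuousOn f (Set.Ioi (0 : ℝ)))
    (hbdd : ∃ C : ℝ, ∀ y ∈ Set.Ioi (0 : ℝ), |f y| ≤ C)
    (x : ℝ) (hx : 0 < x) :
    Tendsto (fun t => ∫ y in Set.Ioi (0 : ℝ), diffusionKernel t x y * f y)
      (𝓝[>] (0 : ℝ)) (𝓝 (f x)) := by
  obtain ⟨C, hC⟩ := hbdd
  have hC0 : 0 ≤ C := (abs_nonneg _).trans (hC x hx)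
  set h : ℝ → ℝ := Set.piecewise (Set.Ioi 0) f (fun _ => 0) with hh
  have hm : Measurable h := hcont.measurable_piecewise continuousOn_const measurableSet_Ioi
  have heq : ∀ y ∈ Set.Ioi (0:ℝ), h y = f y := fun y hy => Set.piecewise_eq_of_mem _ _ _ hy
  have hhC : ∀ y, |h y| ≤ C := by
    intro y
    by_cases hy : y ∈ Set.Ioi (0:ℝ)
    · rw [heq y hy]; exact hC y hy
    · rw [hh, Set.piecewise_eq_of_notMem _ _ _ hy]; simpa using hC0
  have hcx : ContinuousAt h x := by
    refine (hcont.continuousAt (Ioi_mem_nhds hx)).congr ?_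
    filter_upwards [Ioi_mem_nhds hx] with y hy using (heq y hy).symm
  have ha : 0 < √x := Real.sqrt_pos.2 hx
  have hax : √x ^ 2 = x := Real.sq_sqrt hx.le
  have key : Tendsto (fun t : ℝ => ∫ v : ℝ, (√π)⁻¹ * Real.exp (-v ^ 2) * h ((√x + √t * v) ^ 2))
      (𝓝[>] (0 : ℝ)) (𝓝 (∫ v : ℝ, (√π)⁻¹ * Real.exp (-v ^ 2) * h x)) := by
    refine tendsto_integral_filter_of_dominated_convergence
      (fun v : ℝ => (√π)⁻¹ * Real.exp (-v ^ 2) * C) ?_ ?_ ?_ ?_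
    · exact Eventually.of_forall fun t => (dk_integrable h hm C hhC _ _).aestronglyMeasurable
    · refine Eventually.of_forall fun t => Eventually.of_forall fun v => ?_
      rw [norm_mul, Real.norm_of_nonneg (by positivity)]
      exact mul_le_mul_of_nonneg_left (hhC _) (by positivity)
    · exact dk_integrable (fun _ => C) measurable_const C (fun _ => (abs_of_nonneg hC0).le) 0 0
    · refine Eventually.of_forall fun v => ?_
      refine Tendsto.const_mul _ ?_
      refine hcx.tendsto.comp ?_
      have : Continuous fun t : ℝ => (√x + √t * v) ^ 2 := by fun_prop
      have h2 := this.tendsto 0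
      simp only [Real.sqrt_zero, zero_mul, add_zero, hax] at h2
      exact h2.mono_left nhdsWithin_le_nhds
  have hlim : ∫ v : ℝ, (√π)⁻¹ * Real.exp (-v ^ 2) * h x = f x := by
    have hg := integral_gaussian 1
    simp only [neg_mul, one_mul, div_one] at hg
    rw [integral_mul_const, integral_const_mul, hg, inv_mul_cancel₀ (by positivity), one_mul,
      heq x hx]
  rw [hlim] at key
  refine key.congr' ?_
  filter_upwards [self_mem_nhdsWithin] with t ht
  have ht' : 0 < t := ht
  rw [← dk_transform h hm C hhC (√x) (√t) (Real.sqrt_pos.2 ht') ha, hax, Real.sq_sqrt ht'.le]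
  refine setIntegral_congr_fun measurableSet_Ioi fun y hy => ?_
  simp only [heq y hy]
end

section
/- Fix b ∈ ℝ and y ∈ ℝ. If u : (0,∞) × (0,∞) → ℝ is a smooth solution of the spatially varying diffusion equation u_t = x·u_xx + b·u_x, then the characteristic w(t,x) := (x − y + bt)·u(t,x) + 2tx·u_x(t,x) + t²·u_t(t,x) of the symmetry generator v₃ + y·v₀ = t²∂_t + 2tx∂_x − (x − y + bt)u∂_u is again a solution of w_t = x·w_xx + b·w_x. -/
open Real Set

/-- smooth on the quadrant -/
def Sm (u : ℝ → ℝ → ℝ) : Prop :=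
  ContDiffOn ℝ (⊤ : ℕ∞) (fun p : ℝ × ℝ => u p.1 p.2) (Ioi 0 ×ˢ Ioi 0)

/-- x derivative -/
noncomputable def Dx (u : ℝ → ℝ → ℝ) : ℝ → ℝ → ℝ := fun t x => deriv (fun z => u t z) x

/-- t derivative -/
noncomputable def Dt (u : ℝ → ℝ → ℝ) : ℝ → ℝ → ℝ := fun t x => deriv (fun s => u s x) t

lemma quad_open : IsOpen (Ioi (0:ℝ) ×ˢ Ioi (0:ℝ)) := isOpen_Ioi.prod isOpen_Ioi

lemma Sm.at {u} (h : Sm u) {t x : ℝ} (ht : 0 < t) (hx : 0 < x) :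
    ContDiffAt ℝ (⊤ : ℕ∞) (fun p : ℝ × ℝ => u p.1 p.2) (t, x) :=
  ContDiffOn.contDiffAt h (quad_open.mem_nhds ⟨ht, hx⟩)

lemma Sm.fd {u} (h : Sm u) {t x : ℝ} (ht : 0 < t) (hx : 0 < x) :
    HasFDerivAt (fun p : ℝ × ℝ => u p.1 p.2)
      (fderiv ℝ (fun p : ℝ × ℝ => u p.1 p.2) (t, x)) (t, x) :=
  ((h.at ht hx).differentiableAt (by simp)).hasFDerivAt

lemma Sm.hx' {u} (h : Sm u) {t x : ℝ} (ht : 0 < t) (hx : 0 < x) :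
    HasDerivAt (fun z => u t z) (fderiv ℝ (fun p : ℝ × ℝ => u p.1 p.2) (t, x) (0, 1)) x :=
  (h.fd ht hx).comp_hasDerivAt x ((hasDerivAt_const x t).prodMk (hasDerivAt_id x))

lemma Sm.ht' {u} (h : Sm u) {t x : ℝ} (ht : 0 < t) (hx : 0 < x) :
    HasDerivAt (fun s => u s x) (fderiv ℝ (fun p : ℝ × ℝ => u p.1 p.2) (t, x) (1, 0)) t :=
  HasFDerivAt.comp_hasDerivAt (l := fun p : ℝ × ℝ => u p.1 p.2) (f := fun s => (s, x)) t
    (h.fd ht hx) ((hasDerivAt_id t).prodMk (hasDerivAt_const t x))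

lemma Sm.hasX {u} (h : Sm u) {t x : ℝ} (ht : 0 < t) (hx : 0 < x) :
    HasDerivAt (fun z => u t z) (Dx u t x) x :=
  (h.hx' ht hx).differentiableAt.hasDerivAt

lemma Sm.hasT {u} (h : Sm u) {t x : ℝ} (ht : 0 < t) (hx : 0 < x) :
    HasDerivAt (fun s => u s x) (Dt u t x) t :=
  (h.ht' ht hx).differentiableAt.hasDerivAt

lemma Sm.fdS {u} (h : Sm u) :
    ContDiffOn ℝ (⊤ : ℕ∞) (fderiv ℝ (fun p : ℝ × ℝ => u p.1 p.2)) (Ioi 0 ×ˢ Ioi 0) :=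
  ContDiffOn.fderiv_of_isOpen h quad_open (by simp)

lemma Sm.dx {u} (h : Sm u) : Sm (Dx u) :=
  (h.fdS.clm_apply (contDiffOn_const (c := ((0, 1) : ℝ × ℝ)))).congr
    fun _ hp => (h.hx' hp.1 hp.2).deriv

lemma Sm.dt {u} (h : Sm u) : Sm (Dt u) :=
  (h.fdS.clm_apply (contDiffOn_const (c := ((1, 0) : ℝ × ℝ)))).congr
    fun _ hp => (h.ht' hp.1 hp.2).deriv

lemma Sm.comm {u} (h : Sm u) {t x : ℝ} (ht : 0 < t) (hx : 0 < x) :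
    Dt (Dx u) t x = Dx (Dt u) t x := by
  have hs : IsSymmSndFDerivAt ℝ (fun p : ℝ × ℝ => u p.1 p.2) (t, x) :=
    (h.at ht hx).isSymmSndFDerivAt (by
      rw [minSmoothness_of_isRCLikeNormedField]
      exact WithTop.coe_le_coe.2 (le_top : (2 : ℕ∞) ≤ ⊤))
  have hm : Ioi (0:ℝ) ×ˢ Ioi (0:ℝ) ∈ nhds (t, x) := quad_open.mem_nhds ⟨ht, hx⟩
  have hd : HasFDerivAt (fderiv ℝ (fun p : ℝ × ℝ => u p.1 p.2))
      (fderiv ℝ (fderiv ℝ (fun p : ℝ × ℝ => u p.1 p.2)) (t, x)) (t, x) :=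
    ((h.fdS.contDiffAt hm).differentiableAt (by simp)).hasFDerivAt
  have e1 : HasDerivAt (fun s => fderiv ℝ (fun p : ℝ × ℝ => u p.1 p.2) (s, x) (0, 1))
      (fderiv ℝ (fderiv ℝ (fun p : ℝ × ℝ => u p.1 p.2)) (t, x) (1, 0) (0, 1)) t := by
    have c := HasFDerivAt.comp_hasDerivAt (f := fun s => (s, x)) t hd
      ((hasDerivAt_id t).prodMk (hasDerivAt_const t x))
    simpa using c.clm_apply (hasDerivAt_const t ((0, 1) : ℝ × ℝ))
  have e2 : HasDerivAt (fun z => fderiv ℝ (fun p : ℝ × ℝ => u p.1 p.2) (t, z) (1, 0))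
      (fderiv ℝ (fderiv ℝ (fun p : ℝ × ℝ => u p.1 p.2)) (t, x) (0, 1) (1, 0)) x := by
    have c := HasFDerivAt.comp_hasDerivAt (f := fun z => (t, z)) x hd
      ((hasDerivAt_const x t).prodMk (hasDerivAt_id x))
    simpa using c.clm_apply (hasDerivAt_const x ((1, 0) : ℝ × ℝ))
  have f1 := e1.congr_of_eventuallyEq (f₁ := fun s => Dx u s x) (by
    filter_upwards [lt_mem_nhds ht] with s hs using (h.hx' hs hx).deriv)
  have f2 := e2.congr_of_eventuallyEq (f₁ := fun z => Dt u t z) (by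
    filter_upwards [lt_mem_nhds hx] with s hs using (h.ht' ht hs).deriv)
  have g1 : Dt (Dx u) t x = _ := f1.deriv
  have g2 : Dx (Dt u) t x = _ := f2.deriv
  rw [g1, g2]
  exact hs (1, 0) (0, 1)


open Real Set

/-- If `u` is a smooth solution of the spatially varying diffusion equation
`u_t = x·u_xx + b·u_x` on `(0,∞) × (0,∞)`, then the characteristic
`w(t,x) := (x − y + bt)·u + 2tx·u_x + t²·u_t` of the symmetry generator
`v₃ + y·v₀ = t²∂_t + 2tx∂_x − (x − y + bt)u∂_u` is again a solution of
`w_t = x·w_xx + b·w_x`. -/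
theorem characteristic_of_diffusion_symmetry_is_solution (b y : ℝ) (u : ℝ → ℝ → ℝ)
    (hsmooth : ContDiffOn ℝ (⊤ : ℕ∞) (fun p : ℝ × ℝ => u p.1 p.2) (Ioi 0 ×ˢ Ioi 0))
    (hdiff : ∀ t > (0 : ℝ), ∀ x > (0 : ℝ),
      deriv (fun s => u s x) t =
        x * iteratedDeriv 2 (fun z => u t z) x + b * deriv (fun z => u t z) x) :
    ∀ t > (0 : ℝ), ∀ x > (0 : ℝ),
      deriv (fun s => (fun t' x' => (x' - y + b * t') * u t' x'
          + 2 * t' * x' * deriv (fun z => u t' z) x'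
          + t' ^ 2 * deriv (fun r => u r x') t') s x) t =
        x * iteratedDeriv 2 (fun z => (fun t' x' => (x' - y + b * t') * u t' x'
            + 2 * t' * x' * deriv (fun z' => u t' z') x'
            + t' ^ 2 * deriv (fun r => u r x') t') t z) x +
          b * deriv (fun z => (fun t' x' => (x' - y + b * t') * u t' x'
            + 2 * t' * x' * deriv (fun z' => u t' z') x'
            + t' ^ 2 * deriv (fun r => u r x') t') t z) x := by

  intro t ht x hx
  have h : Sm u := hsmooth
  have pde : ∀ t > (0 : ℝ), ∀ x > (0 : ℝ), Dt u t x = x * Dx (Dx u) t x + b * Dx u t x := by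
    intro t ht x hx
    have := hdiff t ht x hx
    rw [iteratedDeriv_succ, iteratedDeriv_one] at this
    exact this
  -- x-derivative of the equation
  have utx : Dx (Dt u) t x = Dx (Dx u) t x + x * Dx (Dx (Dx u)) t x + b * Dx (Dx u) t x := by
    have e := ((hasDerivAt_id x).mul (h.dx.dx.hasX ht hx)).add ((h.dx.hasX ht hx).const_mul b)
    have f := e.congr_of_eventuallyEq (f₁ := fun z => Dt u t z) (by
      filter_upwards [lt_mem_nhds hx] with z hz using pde t ht z hz)
    have g : Dx (Dt u) t x = _ := f.deriv
    rw [g]; simp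
  -- t-derivative of the equation
  have uxxt : Dt (Dx (Dx u)) t x = Dx (Dx (Dt u)) t x := by
    rw [h.dx.comm ht hx]
    refine Filter.EventuallyEq.deriv_eq ?_
    filter_upwards [lt_mem_nhds hx] with z hz using h.comm ht hz
  have utt : Dt (Dt u) t x = x * Dx (Dx (Dt u)) t x + b * Dx (Dt u) t x := by
    have e := ((h.dx.dx.hasT ht hx).const_mul x).add ((h.dx.hasT ht hx).const_mul b)
    have f := e.congr_of_eventuallyEq (f₁ := fun s => Dt u s x) (by
      filter_upwards [lt_mem_nhds ht] with s hs using pde s hs x hx)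
    have g : Dt (Dt u) t x = _ := f.deriv
    rw [g, uxxt, h.comm ht hx]
  have wt : HasDerivAt (fun s => (x - y + b * s) * u s x + 2 * s * x * Dx u s x
      + s ^ 2 * Dt u s x)
      (b * u t x + (x - y + b * t) * Dt u t x + (2 * x * Dx u t x + 2 * t * x * Dx (Dt u) t x)
        + (2 * t * Dt u t x + t ^ 2 * Dt (Dt u) t x)) t := by
    have a1 : HasDerivAt (fun s : ℝ => x - y + b * s) b t := by
      simpa using ((hasDerivAt_id t).const_mul b).const_add (x - y)
    have a2 : HasDerivAt (fun s : ℝ => 2 * s * x) (2 * x) t := by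
      simpa using ((hasDerivAt_id t).const_mul 2).mul_const x
    have a3 : HasDerivAt (fun s : ℝ => s ^ 2) (2 * t) t := by
      simpa using hasDerivAt_pow 2 t
    rw [← h.comm ht hx]
    exact ((a1.mul (h.hasT ht hx)).add (a2.mul (h.dx.hasT ht hx))).add (a3.mul (h.dt.hasT ht hx))
  have wx : ∀ x > (0 : ℝ), HasDerivAt (fun z => (z - y + b * t) * u t z + 2 * t * z * Dx u t z
      + t ^ 2 * Dt u t z)
      (1 * u t x + (x - y + b * t) * Dx u t x + (2 * t * Dx u t x + 2 * t * x * Dx (Dx u) t x)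
        + t ^ 2 * Dx (Dt u) t x) x := by
    intro x hx
    have a1 : HasDerivAt (fun z : ℝ => z - y + b * t) 1 x := by
      simpa using ((hasDerivAt_id x).sub_const y).add_const (b * t)
    have a2 : HasDerivAt (fun z : ℝ => 2 * t * z) (2 * t) x := by
      simpa using (hasDerivAt_id x).const_mul (2 * t)
    exact ((a1.mul (h.hasX ht hx)).add (a2.mul (h.dx.hasX ht hx))).add
      ((h.dt.hasX ht hx).const_mul (t ^ 2))
  have wxx : HasDerivAt (deriv (fun z => (z - y + b * t) * u t z + 2 * t * z * Dx u t z
      + t ^ 2 * Dt u t z))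
      (1 * Dx u t x + (1 * Dx u t x + (x - y + b * t) * Dx (Dx u) t x)
        + (2 * t * Dx (Dx u) t x + (2 * t * Dx (Dx u) t x + 2 * t * x * Dx (Dx (Dx u)) t x))
        + t ^ 2 * Dx (Dx (Dt u)) t x) x := by
    have a1 : HasDerivAt (fun z : ℝ => z - y + b * t) 1 x := by
      simpa using ((hasDerivAt_id x).sub_const y).add_const (b * t)
    have a2 : HasDerivAt (fun z : ℝ => 2 * t * z) (2 * t) x := by
      simpa using (hasDerivAt_id x).const_mul (2 * t)
    have e := ((((h.hasX ht hx).const_mul 1).add (a1.mul (h.dx.hasX ht hx))).add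
      (((h.dx.hasX ht hx).const_mul (2 * t)).add (a2.mul (h.dx.dx.hasX ht hx)))).add
      ((h.dt.dx.hasX ht hx).const_mul (t ^ 2))
    refine e.congr_of_eventuallyEq ?_
    filter_upwards [lt_mem_nhds hx] with z hz using (wx z hz).deriv
  rw [iteratedDeriv_succ, iteratedDeriv_one]
  have E1 := wt.deriv
  have E2 := (wx x hx).deriv
  have E3 := wxx.deriv
  refine E1.trans (Eq.trans ?_ (congrArg₂ (fun p q => x * p + b * q) E3 E2).symm)
  beta_reduce
  rw [utt, utx, pde t ht x hx]
  ring
end
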